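/- The PCF-to-HEPCF translation correctly computes numerals: for every closed PCF term ⊢ C : Nat, letting C_f := let a = ⟦C⟧ in a (), we have ⊢_E C_f : Unit, and the effect tree ET(C_f) is the tree σ(σ(⋯σ(return(()))⋯)) with n occurrences of σ when C evaluates to the numeral n, and ET(C_f) = ⊥ when C diverges. -/

import Mathlib

/-! HEPCF: EPCF extended with effect handlers. A handler consists of a return
clause `Cr` (binding the returned value, de Bruijn index 0) and, for each
operation `σ`, a clause `Hop σ` binding the parameter `x` (index 1) and the
continuation `r` (index 0). -/

namespace HEPCF

mutual
/-- HEPCF values (de Bruijn representation). -/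
inductive HVal (CV Op : Type) : Type
  | cv : CV → HVal CV Op
  | num : ℕ → ℕ → HVal CV Op
  | var : ℕ → HVal CV Op
  | lam : HComp CV Op → HVal CV Op
  | fixv : HVal CV Op → HVal CV Op
/-- HEPCF computations (de Bruijn representation). -/
inductive HComp (CV Op : Type) : Type
  | app : HVal CV Op → HVal CV Op → HComp CV Op
  | ret : HVal CV Op → HComp CV Op
  | letin : HComp CV Op → HComp CV Op → HComp CV Op
  | opc : Op → HVal CV Op → HComp CV Op → HComp CV Op
  | case : (k : ℕ) → HVal CV Op → (Fin k → HComp CV Op) → HComp CV Op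
  | handle : HComp CV Op → (Op → HComp CV Op) → HComp CV Op → HComp CV Op
end

variable {CV Op : Type}

/-- Lifting of a renaming under a binder. -/
def upr (ρ : ℕ → ℕ) : ℕ → ℕ
  | 0 => 0
  | n + 1 => ρ n + 1

mutual
/-- Renaming of variables in values. -/
def renV (ρ : ℕ → ℕ) : HVal CV Op → HVal CV Op
  | .cv v => .cv v
  | .num n k => .num n k
  | .var n => .var (ρ n)
  | .lam C => .lam (renC (upr ρ) C)
  | .fixv V => .fixv (renV (upr ρ) V)
/-- Renaming of variables in computations. -/
def renC (ρ : ℕ → ℕ) : HComp CV Op → HComp CV Op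
  | .app V W => .app (renV ρ V) (renV ρ W)
  | .ret V => .ret (renV ρ V)
  | .letin C B => .letin (renC ρ C) (renC (upr ρ) B)
  | .opc σ V C => .opc σ (renV ρ V) (renC (upr ρ) C)
  | .case k V Cs => .case k (renV ρ V) (fun i => renC ρ (Cs i))
  | .handle Cr Hop C =>
      .handle (renC (upr ρ) Cr) (fun σ => renC (upr (upr ρ)) (Hop σ)) (renC ρ C)
end

/-- Lifting of a substitution under a binder. -/
def upsH (σ : ℕ → HVal CV Op) : ℕ → HVal CV Op
  | 0 => .var 0
  | n + 1 => renV Nat.succ (σ n)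

mutual
/-- Simultaneous substitution of values for variables, in values. -/
def subV (σ : ℕ → HVal CV Op) : HVal CV Op → HVal CV Op
  | .cv v => .cv v
  | .num n k => .num n k
  | .var n => σ n
  | .lam C => .lam (subC (upsH σ) C)
  | .fixv V => .fixv (subV (upsH σ) V)
/-- Simultaneous substitution of values for variables, in computations. -/
def subC (σ : ℕ → HVal CV Op) : HComp CV Op → HComp CV Op
  | .app V W => .app (subV σ V) (subV σ W)
  | .ret V => .ret (subV σ V)
  | .letin C B => .letin (subC σ C) (subC (upsH σ) B)
  | .opc op V C => .opc op (subV σ V) (subC (upsH σ) C)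
  | .case k V Cs => .case k (subV σ V) (fun i => subC σ (Cs i))
  | .handle Cr Hop C =>
      .handle (subC (upsH σ) Cr) (fun op => subC (upsH (upsH σ)) (Hop op))
        (subC σ C)
end

/-- Substitution `C[W/x]` of the value `W` for the variable `0`. -/
def subst0C (W : HVal CV Op) (C : HComp CV Op) : HComp CV Op :=
  subC (fun n => match n with | 0 => W | n + 1 => .var n) C

/-- Substitution `V[W/x]` of the value `W` for the variable `0`. -/
def subst0V (W : HVal CV Op) (V : HVal CV Op) : HVal CV Op :=
  subV (fun n => match n with | 0 => W | n + 1 => .var n) V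

/-- The simultaneous substitution `[r := A, x := B]` used when a handler
catches an operation (`r` is the innermost bound variable). -/
def sub2 (A B : HVal CV Op) : ℕ → HVal CV Op
  | 0 => A
  | 1 => B
  | n + 2 => .var n

/-- The value `λy. handle H C` passed as the captured continuation when the
handler `H = (Cr, Hop)` catches an operation with continuation `C`. -/
def contVal (Cr : HComp CV Op) (Hop : Op → HComp CV Op) (C : HComp CV Op) :
    HVal CV Op :=
  .lam (.handle (renC (upr Nat.succ) Cr)
    (fun σ => renC (upr (upr Nat.succ)) (Hop σ)) C)

/-- The reduction relation of HEPCF. -/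
inductive HStep : HComp CV Op → HComp CV Op → Prop
  | beta (C : HComp CV Op) (W : HVal CV Op) :
      HStep (.app (.lam C) W) (subst0C W C)
  | fix (V W : HVal CV Op) :
      HStep (.app (.fixv V) W) (.app (subst0V (.fixv V) V) W)
  | case {n k : ℕ} (h : n < k) (Cs : Fin k → HComp CV Op) :
      HStep (.case k (.num n k) Cs) (Cs ⟨n, h⟩)
  | letRet (V : HVal CV Op) (C : HComp CV Op) :
      HStep (.letin (.ret V) C) (subst0C V C)
  | letCong {C C' : HComp CV Op} (B : HComp CV Op) :
      HStep C C' → HStep (.letin C B) (.letin C' B)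
  | letOp (σ : Op) (V : HVal CV Op) (C D : HComp CV Op) :
      HStep (.letin (.opc σ V C) D) (.opc σ V (.letin C (renC (upr Nat.succ) D)))
  | hCong {C C' : HComp CV Op} (Cr : HComp CV Op) (Hop : Op → HComp CV Op) :
      HStep C C' → HStep (.handle Cr Hop C) (.handle Cr Hop C')
  | hRet (Cr : HComp CV Op) (Hop : Op → HComp CV Op) (V : HVal CV Op) :
      HStep (.handle Cr Hop (.ret V)) (subst0C V Cr)
  | hOp (Cr : HComp CV Op) (Hop : Op → HComp CV Op) (σ : Op)
      (V : HVal CV Op) (C : HComp CV Op) :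
      HStep (.handle Cr Hop (.opc σ V C))
        (subC (sub2 (contVal Cr Hop C) V) (Hop σ))

end HEPCF

namespace HEPCF

/-- HEPCF types: base types, enumeration types, and effect-annotated arrows
`T →_E U` where `E` is a set of operations. -/
inductive HTy (BV Op : Type) : Type
  | base : BV → HTy BV Op
  | enum : ℕ → HTy BV Op
  | arr : HTy BV Op → Set Op → HTy BV Op → HTy BV Op

section Typing

variable {BV CV Op : Type} (cvTy : CV → BV) (opPar : Op → BV) (opAr : Op → ℕ)

mutual
/-- Typing judgment for HEPCF values. -/
inductive HVTy : List (HTy BV Op) → HVal CV Op → HTy BV Op → Prop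
  | cv {Γ} (v : CV) : HVTy Γ (.cv v) (.base (cvTy v))
  | num {Γ n k} : n < k → HVTy Γ (.num n k) (.enum k)
  | var {Γ n T} : Γ[n]? = some T → HVTy Γ (.var n) T
  | lam {Γ C T E U} : HCTy (T :: Γ) E C U → HVTy Γ (.lam C) (.arr T E U)
  | fixv {Γ V T E U} : HVTy ((HTy.arr T E U) :: Γ) V (.arr T E U) →
      HVTy Γ (.fixv V) (.arr T E U)
/-- Typing judgment `Γ ⊢_E C : T` for HEPCF computations. The rule for
`handle` types the return clause and the clauses for the handled operations
`E'` (the clause for `σᵢ` binds the parameter `x : Bᵢ` and the continuation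
`r : kᵢ →_E T`). -/
inductive HCTy : List (HTy BV Op) → Set Op → HComp CV Op → HTy BV Op → Prop
  | app {Γ E V W T U} : HVTy Γ V (.arr T E U) → HVTy Γ W T →
      HCTy Γ E (.app V W) U
  | ret {Γ E V T} : HVTy Γ V T → HCTy Γ E (.ret V) T
  | letin {Γ E C B T U} : HCTy Γ E C T → HCTy (T :: Γ) E B U →
      HCTy Γ E (.letin C B) U
  | opc {Γ E σ V C T} : σ ∈ E → HVTy Γ V (.base (opPar σ)) →
      HCTy ((HTy.enum (opAr σ)) :: Γ) E C T → HCTy Γ E (.opc σ V C) T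
  | case {Γ E k V T} {Cs : Fin k → HComp CV Op} : HVTy Γ V (.enum k) →
      (∀ i, HCTy Γ E (Cs i) T) → HCTy Γ E (.case k V Cs) T
  | handle {Γ E C Cr Hop T U} {E' : Set Op} :
      HCTy Γ E' C U →
      HCTy (U :: Γ) E Cr T →
      (∀ σ ∈ E',
        HCTy ((HTy.arr (.enum (opAr σ)) E T) :: (HTy.base (opPar σ)) :: Γ)
          E (Hop σ) T) →
      HCTy Γ E (.handle Cr Hop C) T
end

end Typing

end HEPCF

namespace HEPCF

/-- Labels of effect trees of HEPCF computations: operation nodes, parameter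
leaves (constant values), and return leaves. -/
inductive HLab (CV Op : Type) : Type
  | opl : Op → HLab CV Op
  | cvl : CV → HLab CV Op
  | retl : HVal CV Op → HLab CV Op

variable {CV Op : Type}

/-- An HEPCF computation diverges when its reduction never terminates. -/
def HDiverges (C : HComp CV Op) : Prop :=
  ∀ D, Relation.ReflTransGen HStep C D → ∃ D', HStep D D'

/-- The effect tree `ET(C)` of an HEPCF computation, described position by
position: `ETAt opAr C p l` holds when `ET(C)` carries label `l` at
position `p` (`none` standing for `⊥`). An operation `σ : B ⇝ k` is a node
of arity `k+1` whose child `0` is a leaf carrying the parameter. -/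
inductive ETAt (opAr : Op → ℕ) : HComp CV Op → List ℕ → Option (HLab CV Op) → Prop
  | bot {C} : HDiverges C → ETAt opAr C [] none
  | retn {C V} : Relation.ReflTransGen HStep C (.ret V) →
      ETAt opAr C [] (some (.retl V))
  | opHead {C σ V C'} : Relation.ReflTransGen HStep C (.opc σ V C') →
      ETAt opAr C [] (some (.opl σ))
  | opParam {C σ v C'} :
      Relation.ReflTransGen HStep C (.opc σ (.cv v) C') →
      ETAt opAr C [0] (some (.cvl v))
  | opChild {C σ V C' i p l} :
      Relation.ReflTransGen HStep C (.opc σ V C') → i < opAr σ →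
      ETAt opAr (subst0C (.num i (opAr σ)) C') p l →
      ETAt opAr C ((i + 1) :: p) l

end HEPCF

/-! Plotkin's PCF, in fine-grained call-by-value form.
The `case` construct is annotated with the common type of its branches. -/

namespace PCF

/-- PCF types: natural numbers and arrows. -/
inductive PTy : Type
  | nat : PTy
  | arr : PTy → PTy → PTy

mutual
/-- PCF values (de Bruijn representation). -/
inductive PVal : Type
  | zero : PVal
  | succ : PVal → PVal
  | var : ℕ → PVal
  | lam : PComp → PVal
  | fixp : PVal → PVal
/-- PCF computations. `pcase T V C D` is `case(V; 0 ↦ C; succ(n) ↦ D)` where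
`D` binds `n` and both branches have type `T`. -/
inductive PComp : Type
  | app : PVal → PVal → PComp
  | ret : PVal → PComp
  | letin : PComp → PComp → PComp
  | pcase : PTy → PVal → PComp → PComp → PComp
end

/-- Lifting of a renaming under a binder. -/
def upr (ρ : ℕ → ℕ) : ℕ → ℕ
  | 0 => 0
  | n + 1 => ρ n + 1

mutual
/-- Renaming of variables in PCF values. -/
def renV (ρ : ℕ → ℕ) : PVal → PVal
  | .zero => .zero
  | .succ V => .succ (renV ρ V)
  | .var n => .var (ρ n)
  | .lam C => .lam (renC (upr ρ) C)
  | .fixp V => .fixp (renV (upr ρ) V)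
/-- Renaming of variables in PCF computations. -/
def renC (ρ : ℕ → ℕ) : PComp → PComp
  | .app V W => .app (renV ρ V) (renV ρ W)
  | .ret V => .ret (renV ρ V)
  | .letin C B => .letin (renC ρ C) (renC (upr ρ) B)
  | .pcase T V C D => .pcase T (renV ρ V) (renC ρ C) (renC (upr ρ) D)
end

/-- Lifting of a substitution under a binder. -/
def upsP (σ : ℕ → PVal) : ℕ → PVal
  | 0 => .var 0
  | n + 1 => renV Nat.succ (σ n)

mutual
/-- Simultaneous substitution in PCF values. -/
def subV (σ : ℕ → PVal) : PVal → PVal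
  | .zero => .zero
  | .succ V => .succ (subV σ V)
  | .var n => σ n
  | .lam C => .lam (subC (upsP σ) C)
  | .fixp V => .fixp (subV (upsP σ) V)
/-- Simultaneous substitution in PCF computations. -/
def subC (σ : ℕ → PVal) : PComp → PComp
  | .app V W => .app (subV σ V) (subV σ W)
  | .ret V => .ret (subV σ V)
  | .letin C B => .letin (subC σ C) (subC (upsP σ) B)
  | .pcase T V C D => .pcase T (subV σ V) (subC σ C) (subC (upsP σ) D)
end

/-- Substitution of `W` for the variable `0` in a computation. -/
def subst0C (W : PVal) (C : PComp) : PComp :=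
  subC (fun n => match n with | 0 => W | n + 1 => .var n) C

/-- Substitution of `W` for the variable `0` in a value. -/
def subst0V (W : PVal) (V : PVal) : PVal :=
  subV (fun n => match n with | 0 => W | n + 1 => .var n) V

/-- The reduction relation of PCF. -/
inductive PStep : PComp → PComp → Prop
  | beta (C : PComp) (W : PVal) : PStep (.app (.lam C) W) (subst0C W C)
  | fix (V W : PVal) :
      PStep (.app (.fixp V) W) (.app (subst0V (.fixp V) V) W)
  | letRet (V : PVal) (C : PComp) : PStep (.letin (.ret V) C) (subst0C V C)
  | letCong {C C'} (B : PComp) : PStep C C' → PStep (.letin C B) (.letin C' B)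
  | caseZero (T : PTy) (C D : PComp) : PStep (.pcase T .zero C D) C
  | caseSucc (T : PTy) (V : PVal) (C D : PComp) :
      PStep (.pcase T (.succ V) C D) (subst0C V D)

mutual
/-- Typing judgment for PCF values. -/
inductive PVTy : List PTy → PVal → PTy → Prop
  | zero {Γ} : PVTy Γ .zero .nat
  | succ {Γ V} : PVTy Γ V .nat → PVTy Γ (.succ V) .nat
  | var {Γ n T} : Γ[n]? = some T → PVTy Γ (.var n) T
  | lam {Γ C T U} : PCTy (T :: Γ) C U → PVTy Γ (.lam C) (.arr T U)
  | fixp {Γ V T U} : PVTy ((PTy.arr T U) :: Γ) V (.arr T U) →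
      PVTy Γ (.fixp V) (.arr T U)
/-- Typing judgment for PCF computations. -/
inductive PCTy : List PTy → PComp → PTy → Prop
  | app {Γ V W T U} : PVTy Γ V (.arr T U) → PVTy Γ W T →
      PCTy Γ (.app V W) U
  | ret {Γ V T} : PVTy Γ V T → PCTy Γ (.ret V) T
  | letin {Γ C B T U} : PCTy Γ C T → PCTy (T :: Γ) B U →
      PCTy Γ (.letin C B) U
  | pcase {Γ V C D T} : PVTy Γ V .nat → PCTy Γ C T →
      PCTy (PTy.nat :: Γ) D T → PCTy Γ (.pcase T V C D) T
end

/-- The PCF numeral `n`. -/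
def pnum : ℕ → PVal
  | 0 => .zero
  | n + 1 => .succ (pnum n)

end PCF

/-! The translation from PCF to (finitary) HEPCF. The HEPCF signature has a
single base type `Unit` (with single constant value `()`), and the single
operation `σ : Unit ⇝ 1`, so `CV = BV = Op = Unit`, `opAr = 1`. A natural
number `n` is represented by a thunk performing the effect `σ` exactly `n`
times and then returning `()`. -/

namespace P2H

open PCF HEPCF

/-- The base-type assignment of the signature: the only constant `()` has
type `Unit`. -/
def cvTyU : Unit → Unit := fun _ => ()

/-- The parameter type of the single operation `σ : Unit ⇝ 1`. -/
def opParU : Unit → Unit := fun _ => ()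

/-- The arity of the single operation `σ : Unit ⇝ 1`. -/
def opArU : Unit → ℕ := fun _ => 1

/-- The effect set `E = {σ : Unit ⇝ 1}` (all operations of the signature). -/
def EU : Set Unit := Set.univ

/-- Translation of PCF types: `⟦Nat⟧ = Unit →_E Unit`,
`⟦T → U⟧ = ⟦T⟧ →_E ⟦U⟧`. -/
def trTy : PTy → HTy Unit Unit
  | .nat => .arr (.base ()) EU (.base ())
  | .arr T U => .arr (trTy T) EU (trTy U)

/-- The zero value `Z_T` of an HEPCF type. -/
def Z : HTy Unit Unit → HVal Unit Unit
  | .base _ => .cv ()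
  | .enum k => .num 0 k
  | .arr _ _ U => .lam (.ret (Z U))

/-- The value `λf,g. g ()` selecting the second component of an encoded pair
of thunks. -/
def sndSel : HVal Unit Unit :=
  .lam (.ret (.lam (.app (.var 0) (.cv ()))))

/-- The zero value `Z_{Unit → Unit}`. -/
def ZUU : HVal Unit Unit := .lam (.ret (.cv ()))

/-- The return clause of the handler `H(C,D)`:
`return(V) ↦ return(λp. p Z_{Unit→Unit} (λx.⟦C⟧))` (given `⟦C⟧`). -/
def retClause (tC : HComp Unit Unit) : HComp Unit Unit :=
  .ret (.lam (.letin (.app (.var 0) ZUU)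
    (.app (.var 0) (.lam (renC (· + 4) tC)))))

/-- The `σ` clause of the handler `H(C,D)` (given `⟦D⟧` and the type `T` of
the branches):
`σ(r) ↦ let n = return(λx. let y = r 0̲ (λf,g. let z = f () in Z_{⟦T⟧})
               in return(Z_Unit))
        in return(λp. p (λx. σ(z. n ())) (λx. ⟦D⟧))`. -/
def sigClause (T : PTy) (tD : HComp Unit Unit) : HComp Unit Unit :=
  .letin
    (.ret (.lam
      (.letin
        (.letin (.app (.var 1) (.num 0 1))
          (.app (.var 0)
            (.lam (.ret (.lam
              (.letin (.app (.var 1) (.cv ())) (.ret (Z (trTy T)))))))))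
        (.ret (.cv ())))))
    (.ret (.lam
      (.letin (.app (.var 0) (.lam (.opc () (.cv ()) (.app (.var 3) (.cv ())))))
        (.app (.var 0)
          (.lam (renC (fun m => match m with | 0 => 3 | m + 1 => m + 6) tD))))))

mutual
/-- Translation of PCF values into HEPCF. -/
def trV : PVal → HVal Unit Unit
  | .zero => .lam (.ret (.cv ()))
  | .succ V => .lam (.opc () (.cv ()) (.app (renV (· + 2) (trV V)) (.cv ())))
  | .var n => .var n
  | .lam C => .lam (trC C)
  | .fixp V => .fixv (trV V)
/-- Translation of PCF computations into HEPCF. The `case` construct is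
translated as
`⟦case(V;0↦C;succ(n)↦D)⟧ = let a = (handle H(C,D) (⟦V⟧ ())) in a (λf,g. g ())`. -/
def trC : PComp → HComp Unit Unit
  | .app V W => .app (trV V) (trV W)
  | .ret V => .ret (trV V)
  | .letin C B => .letin (trC C) (trC B)
  | .pcase T V C D =>
      .letin
        (.handle (retClause (trC C)) (fun _ => sigClause T (trC D))
          (.app (trV V) (.cv ())))
        (.app (.var 0) sndSel)
end

end P2H

namespace P2H

open PCF HEPCF

/-- A PCF computation diverges when its reduction never terminates. -/
def PDiverges (C : PComp) : Prop :=
  ∀ D, Relation.ReflTransGen PStep C D → ∃ D', PStep D D'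

/-- The effect tree `σ(σ(⋯σ(return(()))⋯))` with `n` occurrences of `σ`,
described position by position (each `σ` node has the parameter leaf `()` as
child `0` and its continuation as child `1`). -/
def numTreeAt (n : ℕ) (p : List ℕ) (l : Option (HLab Unit Unit)) : Prop :=
  (∃ m, m < n ∧ p = List.replicate m 1 ∧ l = some (.opl ())) ∨
  (∃ m, m < n ∧ p = List.replicate m 1 ++ [0] ∧ l = some (.cvl ())) ∨
  (p = List.replicate n 1 ∧ l = some (.retl (.cv ())))

/-- The HEPCF computation `C_f = let a = ⟦C⟧ in a ()` associated with a
closed PCF computation `C` of type `Nat`. -/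
def Cf (C : PComp) : HComp Unit Unit :=
  .letin (trC C) (.app (.var 0) (.cv ()))

end P2H

namespace HAux

open HEPCF

section Algebra

variable {CV Op : Type}

theorem upr_comp (ρ ρ' : ℕ → ℕ) : upr ρ ∘ upr ρ' = upr (ρ ∘ ρ') := by
  funext n; cases n <;> rfl

theorem upsH_upr (σ : ℕ → HVal CV Op) (ρ : ℕ → ℕ) : upsH σ ∘ upr ρ = upsH (σ ∘ ρ) := by
  funext n; cases n <;> rfl

theorem upsH_var : upsH (HVal.var : ℕ → HVal CV Op) = HVal.var := by
  funext n; cases n <;> simp [upsH, renV]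

theorem upsH_varren (ρ : ℕ → ℕ) :
    upsH (fun n => (HVal.var (ρ n) : HVal CV Op)) = fun n => HVal.var (upr ρ n) := by
  funext n; cases n <;> simp [upsH, renV, upr]

mutual
theorem renV_sub : ∀ (V : HVal CV Op) (ρ : ℕ → ℕ), renV ρ V = subV (fun n => .var (ρ n)) V
  | .cv _, _ => by simp [renV, subV]
  | .num _ _, _ => by simp [renV, subV]
  | .var _, _ => by simp [renV, subV]
  | .lam C, ρ => by simp [renV, subV, upsH_varren, renC_sub C]
  | .fixv V, ρ => by simp [renV, subV, upsH_varren, renV_sub V]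
theorem renC_sub : ∀ (C : HComp CV Op) (ρ : ℕ → ℕ), renC ρ C = subC (fun n => .var (ρ n)) C
  | .app V W, ρ => by simp [renC, subC, renV_sub V, renV_sub W]
  | .ret V, ρ => by simp [renC, subC, renV_sub V]
  | .letin C B, ρ => by simp [renC, subC, upsH_varren, renC_sub C, renC_sub B]
  | .opc s V C, ρ => by simp [renC, subC, upsH_varren, renV_sub V, renC_sub C]
  | .case k V Cs, ρ => by
      simp only [renC, subC, renV_sub V]
      congr 1; funext i; exact renC_sub (Cs i) _
  | .handle Cr Hop C, ρ => by
      simp only [renC, subC, upsH_varren, renC_sub C, renC_sub Cr]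
      congr 1; funext i; exact renC_sub (Hop i) _
end

mutual
theorem subV_ren : ∀ (V : HVal CV Op) (σ : ℕ → HVal CV Op) (ρ : ℕ → ℕ),
    subV σ (renV ρ V) = subV (σ ∘ ρ) V
  | .cv _, _, _ => by simp [renV, subV]
  | .num _ _, _, _ => by simp [renV, subV]
  | .var _, _, _ => by simp [renV, subV]
  | .lam C, σ, ρ => by simp [renV, subV, subC_ren C, upsH_upr]
  | .fixv V, σ, ρ => by simp [renV, subV, subV_ren V, upsH_upr]
theorem subC_ren : ∀ (C : HComp CV Op) (σ : ℕ → HVal CV Op) (ρ : ℕ → ℕ),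
    subC σ (renC ρ C) = subC (σ ∘ ρ) C
  | .app V W, σ, ρ => by simp [renC, subC, subV_ren V, subV_ren W]
  | .ret V, σ, ρ => by simp [renC, subC, subV_ren V]
  | .letin C B, σ, ρ => by simp [renC, subC, upsH_upr, subC_ren C, subC_ren B]
  | .opc s V C, σ, ρ => by simp [renC, subC, upsH_upr, subV_ren V, subC_ren C]
  | .case k V Cs, σ, ρ => by
      simp only [renC, subC, subV_ren V]
      congr 1; funext i; exact subC_ren (Cs i) _ _
  | .handle Cr Hop C, σ, ρ => by
      simp only [renC, subC, upsH_upr, subC_ren C, subC_ren Cr]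
      congr 1; funext i; rw [subC_ren (Hop i), upsH_upr, upsH_upr]
end

theorem renV_renV (V : HVal CV Op) (ρ ρ' : ℕ → ℕ) :
    renV ρ (renV ρ' V) = renV (ρ ∘ ρ') V := by
  rw [renV_sub _ ρ, subV_ren, renV_sub]; rfl

theorem renC_renC (C : HComp CV Op) (ρ ρ' : ℕ → ℕ) :
    renC ρ (renC ρ' C) = renC (ρ ∘ ρ') C := by
  rw [renC_sub _ ρ, subC_ren, renC_sub]; rfl

theorem upr_upsH (σ : ℕ → HVal CV Op) (ρ : ℕ → ℕ) :
    (fun n => renV (upr ρ) (upsH σ n)) = upsH (fun n => renV ρ (σ n)) := by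
  funext n; cases n with
  | zero => simp [upsH, renV, upr]
  | succ n => simp only [upsH, renV_renV]; rfl

mutual
theorem ren_subV : ∀ (V : HVal CV Op) (σ : ℕ → HVal CV Op) (ρ : ℕ → ℕ),
    renV ρ (subV σ V) = subV (fun n => renV ρ (σ n)) V
  | .cv _, _, _ => by simp [renV, subV]
  | .num _ _, _, _ => by simp [renV, subV]
  | .var _, _, _ => by simp [subV]
  | .lam C, σ, ρ => by simp [renV, subV, ren_subC C, upr_upsH]
  | .fixv V, σ, ρ => by simp [renV, subV, ren_subV V, upr_upsH]
theorem ren_subC : ∀ (C : HComp CV Op) (σ : ℕ → HVal CV Op) (ρ : ℕ → ℕ),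
    renC ρ (subC σ C) = subC (fun n => renV ρ (σ n)) C
  | .app V W, σ, ρ => by simp [renC, subC, ren_subV V, ren_subV W]
  | .ret V, σ, ρ => by simp [renC, subC, ren_subV V]
  | .letin C B, σ, ρ => by simp [renC, subC, upr_upsH, ren_subC C, ren_subC B]
  | .opc s V C, σ, ρ => by simp [renC, subC, upr_upsH, ren_subV V, ren_subC C]
  | .case k V Cs, σ, ρ => by
      simp only [renC, subC, ren_subV V]
      congr 1; funext i; exact ren_subC (Cs i) _ _
  | .handle Cr Hop C, σ, ρ => by
      simp only [renC, subC, upr_upsH, ren_subC C, ren_subC Cr]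
      congr 1; funext i; rw [ren_subC (Hop i), upr_upsH, upr_upsH]
end

theorem upsH_comp (σ τ : ℕ → HVal CV Op) :
    (fun n => subV (upsH σ) (upsH τ n)) = upsH (fun n => subV σ (τ n)) := by
  funext n; cases n with
  | zero => simp [upsH, subV]
  | succ n => simp only [upsH, subV_ren, ren_subV]; rfl

mutual
theorem subV_sub : ∀ (V : HVal CV Op) (σ τ : ℕ → HVal CV Op),
    subV σ (subV τ V) = subV (fun n => subV σ (τ n)) V
  | .cv _, _, _ => by simp [subV]
  | .num _ _, _, _ => by simp [subV]
  | .var _, _, _ => by simp [subV]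
  | .lam C, σ, ρ => by simp [subV, subC_sub C, upsH_comp]
  | .fixv V, σ, ρ => by simp [subV, subV_sub V, upsH_comp]
theorem subC_sub : ∀ (C : HComp CV Op) (σ τ : ℕ → HVal CV Op),
    subC σ (subC τ C) = subC (fun n => subV σ (τ n)) C
  | .app V W, σ, ρ => by simp [subC, subV_sub V, subV_sub W]
  | .ret V, σ, ρ => by simp [subC, subV_sub V]
  | .letin C B, σ, ρ => by simp [subC, upsH_comp, subC_sub C, subC_sub B]
  | .opc s V C, σ, ρ => by simp [subC, upsH_comp, subV_sub V, subC_sub C]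
  | .case k V Cs, σ, ρ => by
      simp only [subC, subV_sub V]
      congr 1; funext i; exact subC_sub (Cs i) _ _
  | .handle Cr Hop C, σ, ρ => by
      simp only [subC, upsH_comp, subC_sub C, subC_sub Cr]
      congr 1; funext i; rw [subC_sub (Hop i), upsH_comp, upsH_comp]
end

mutual
theorem subV_var : ∀ (V : HVal CV Op), subV .var V = V
  | .cv _ => by simp [subV]
  | .num _ _ => by simp [subV]
  | .var _ => by simp [subV]
  | .lam C => by simp [subV, subC_var C, upsH_var]
  | .fixv V => by simp [subV, subV_var V, upsH_var]
theorem subC_var : ∀ (C : HComp CV Op), subC .var C = C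
  | .app V W => by simp [subC, subV_var V, subV_var W]
  | .ret V => by simp [subC, subV_var V]
  | .letin C B => by simp [subC, upsH_var, subC_var C, subC_var B]
  | .opc s V C => by simp [subC, upsH_var, subV_var V, subC_var C]
  | .case k V Cs => by
      simp only [subC, subV_var V]
      congr 1; funext i; exact subC_var (Cs i)
  | .handle Cr Hop C => by
      simp only [subC, upsH_var, subC_var C, subC_var Cr]
      congr 1; funext i; exact subC_var (Hop i)
end

theorem subst0_sub (τ : ℕ → HVal CV Op) (W : HVal CV Op) (C : HComp CV Op) :
    subC τ (subst0C W C) = subst0C (subV τ W) (subC (upsH τ) C) := by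
  unfold subst0C
  rw [subC_sub, subC_sub]
  congr 1; funext n; cases n with
  | zero => simp [upsH, subV]
  | succ n =>
    simp only [upsH, subV, subV_ren]
    exact (subV_var _).symm

theorem subst0V_sub (τ : ℕ → HVal CV Op) (W : HVal CV Op) (C : HVal CV Op) :
    subV τ (subst0V W C) = subst0V (subV τ W) (subV (upsH τ) C) := by
  unfold subst0V
  rw [subV_sub, subV_sub]
  congr 1; funext n; cases n with
  | zero => simp [upsH, subV]
  | succ n =>
    simp only [upsH, subV, subV_ren]
    exact (subV_var _).symm

theorem upsuccC (τ : ℕ → HVal CV Op) (D : HComp CV Op) :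
    subC (upsH (upsH τ)) (renC (upr Nat.succ) D)
      = renC (upr Nat.succ) (subC (upsH τ) D) := by
  rw [subC_ren, ren_subC]
  congr 1; funext n; cases n with
  | zero => simp [upsH, renV, upr]
  | succ n => simp only [Function.comp, upsH, upr, renV_renV]; rfl

theorem upsuccC2 (τ : ℕ → HVal CV Op) (D : HComp CV Op) :
    subC (upsH (upsH (upsH τ))) (renC (upr (upr Nat.succ)) D)
      = renC (upr (upr Nat.succ)) (subC (upsH (upsH τ)) D) := by
  rw [subC_ren, ren_subC]
  congr 1; funext n; rcases n with _ | _ | n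
  · simp [upsH, renV, upr]
  · simp [upsH, renV, upr]
  · simp only [Function.comp, upsH, upr, renV_renV]; rfl

theorem contVal_sub (τ : ℕ → HVal CV Op) (Cr : HComp CV Op) (Hop : Op → HComp CV Op)
    (C : HComp CV Op) :
    subV τ (contVal Cr Hop C) =
      contVal (subC (upsH τ) Cr) (fun o => subC (upsH (upsH τ)) (Hop o)) (subC (upsH τ) C) := by
  simp only [contVal, subV, subC, upsuccC, upsuccC2]

theorem sub2_sub (τ : ℕ → HVal CV Op) (A B : HVal CV Op) (C : HComp CV Op) :
    subC τ (subC (sub2 A B) C) =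
      subC (sub2 (subV τ A) (subV τ B)) (subC (upsH (upsH τ)) C) := by
  rw [subC_sub, subC_sub]
  congr 1; funext n; rcases n with _ | _ | n
  · simp [upsH, subV, sub2]
  · simp [upsH, subV, sub2, renV]
  · simp only [upsH, subV, subV_ren, sub2]
    exact (subV_var _).symm

theorem step_sub {C D : HComp CV Op} (h : HStep C D) :
    ∀ τ, HStep (subC τ C) (subC τ D) := by
  induction h with
  | beta C W => intro τ; rw [subst0_sub]; simp only [subC, subV]; exact .beta _ _
  | fix V W =>
    intro τ; simp only [subC, subV, subst0V_sub]; exact .fix _ _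
  | case h Cs => intro τ; simp only [subC, subV]; exact .case h (fun i => subC τ (Cs i))
  | letRet V C => intro τ; rw [subst0_sub]; simp only [subC]; exact .letRet _ _
  | letCong B _ ih => intro τ; simp only [subC]; exact .letCong _ (ih τ)
  | letOp s V C D => intro τ; simp only [subC, upsuccC]; exact .letOp _ _ _ _
  | hCong Cr Hop _ ih => intro τ; simp only [subC]; exact .hCong _ _ (ih τ)
  | hRet Cr Hop V => intro τ; rw [subst0_sub]; simp only [subC]; exact .hRet _ _ _
  | hOp Cr Hop s V C =>
    intro τ; rw [sub2_sub, contVal_sub]; simp only [subC]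
    exact .hOp _ (fun o => subC (upsH (upsH τ)) (Hop o)) _ _ _

theorem ret_nostep {V : HVal CV Op} {D : HComp CV Op} : ¬ HStep (.ret V) D := by
  intro h; cases h

theorem opc_nostep {s : Op} {V : HVal CV Op} {C D : HComp CV Op} : ¬ HStep (.opc s V C) D := by
  intro h; cases h

theorem step_det {C D D' : HComp CV Op} (h : HStep C D) : HStep C D' → D = D' := by
  induction h generalizing D' with
  | beta C W => intro h; cases h; rfl
  | fix V W => intro h; cases h; rfl
  | case h Cs => intro h; cases h; rfl
  | letRet V C => intro h; cases h with
    | letRet => rfl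
    | letCong _ h => exact absurd h ret_nostep
  | letCong B h1 ih => intro h; cases h with
    | letRet => exact absurd h1 ret_nostep
    | letCong _ h => rw [ih h]
    | letOp => exact absurd h1 opc_nostep
  | letOp s V C D => intro h; cases h with
    | letCong _ h => exact absurd h opc_nostep
    | letOp => rfl
  | hCong Cr Hop h1 ih => intro h; cases h with
    | hCong _ _ h => rw [ih h]
    | hRet => exact absurd h1 ret_nostep
    | hOp => exact absurd h1 opc_nostep
  | hRet Cr Hop V => intro h; cases h with
    | hCong _ _ h => exact absurd h ret_nostep
    | hRet => rfl
  | hOp Cr Hop s V C => intro h; cases h with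
    | hCong _ _ h => exact absurd h opc_nostep
    | hOp => rfl

/-- Scoping: the free variables are below `k`. -/
def ScV (k : ℕ) (V : HVal CV Op) : Prop :=
  ∀ σ τ : ℕ → HVal CV Op, (∀ i < k, σ i = τ i) → subV σ V = subV τ V

/-- Scoping: the free variables are below `k`. -/
def ScC (k : ℕ) (C : HComp CV Op) : Prop :=
  ∀ σ τ : ℕ → HVal CV Op, (∀ i < k, σ i = τ i) → subC σ C = subC τ C

theorem ups_agree {k : ℕ} {σ τ : ℕ → HVal CV Op} (h : ∀ i < k, σ i = τ i) :
    ∀ i < k + 1, upsH σ i = upsH τ i := by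
  intro i hi; cases i with
  | zero => rfl
  | succ i => simp only [upsH]; rw [h i (by omega)]

theorem ScV.cv {k : ℕ} {v : CV} : ScV k (.cv v : HVal CV Op) := by
  intro σ τ h; simp [subV]
theorem ScV.num {k n m : ℕ} : ScV k (.num n m : HVal CV Op) := by
  intro σ τ h; simp [subV]
theorem ScV.var {k n : ℕ} (hn : n < k) : ScV k (.var n : HVal CV Op) := by
  intro σ τ h; simp [subV, h n hn]
theorem ScV.lam {k : ℕ} {C : HComp CV Op} (h : ScC (k+1) C) : ScV k (.lam C) := by
  intro σ τ hs; simp only [subV]; rw [h _ _ (ups_agree hs)]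
theorem ScV.fixv {k : ℕ} {C : HVal CV Op} (h : ScV (k+1) C) : ScV k (.fixv C) := by
  intro σ τ hs; simp only [subV]; rw [h _ _ (ups_agree hs)]
theorem ScC.app {k : ℕ} {V W : HVal CV Op} (h : ScV k V) (h' : ScV k W) :
    ScC k (.app V W) := by
  intro σ τ hs; simp only [subC]; rw [h _ _ hs, h' _ _ hs]
theorem ScC.ret {k : ℕ} {V : HVal CV Op} (h : ScV k V) : ScC k (.ret V) := by
  intro σ τ hs; simp only [subC]; rw [h _ _ hs]
theorem ScC.letin {k : ℕ} {V W : HComp CV Op} (h : ScC k V) (h' : ScC (k+1) W) :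
    ScC k (.letin V W) := by
  intro σ τ hs; simp only [subC]; rw [h _ _ hs, h' _ _ (ups_agree hs)]
theorem ScC.opc {k : ℕ} {s : Op} {V : HVal CV Op} {W : HComp CV Op} (h : ScV k V)
    (h' : ScC (k+1) W) : ScC k (.opc s V W) := by
  intro σ τ hs; simp only [subC]; rw [h _ _ hs, h' _ _ (ups_agree hs)]
theorem ScC.handle {k : ℕ} {Cr C : HComp CV Op} {Hop : Op → HComp CV Op}
    (h : ScC (k+1) Cr) (h' : ∀ o, ScC (k+2) (Hop o)) (h'' : ScC k C) :
    ScC k (.handle Cr Hop C) := by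
  intro σ τ hs; simp only [subC]; rw [h _ _ (ups_agree hs), h'' _ _ hs]
  congr 1; funext o; exact h' o _ _ (ups_agree (ups_agree hs))

theorem ScC.ren {k m : ℕ} {C : HComp CV Op} {ρ : ℕ → ℕ} (h : ScC k C)
    (hρ : ∀ i < k, ρ i < m) : ScC m (renC ρ C) := by
  intro σ τ hs; rw [subC_ren, subC_ren]; exact h _ _ (fun i hi => hs _ (hρ i hi))
theorem ScV.ren {k m : ℕ} {C : HVal CV Op} {ρ : ℕ → ℕ} (h : ScV k C)
    (hρ : ∀ i < k, ρ i < m) : ScV m (renV ρ C) := by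
  intro σ τ hs; rw [subV_ren, subV_ren]; exact h _ _ (fun i hi => hs _ (hρ i hi))
theorem ScC.mono {k m : ℕ} {C : HComp CV Op} (h : ScC k C) (hk : k ≤ m) : ScC m C :=
  fun σ τ hs => h σ τ (fun i hi => hs i (by omega))
theorem ScV.mono {k m : ℕ} {C : HVal CV Op} (h : ScV k C) (hk : k ≤ m) : ScV m C :=
  fun σ τ hs => h σ τ (fun i hi => hs i (by omega))

theorem ScC.sub {k : ℕ} {C : HComp CV Op} (h : ScC k C) (σ : ℕ → HVal CV Op)
    (hs : ∀ i < k, σ i = .var i) : subC σ C = C := by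
  rw [h σ .var hs, subC_var]
theorem ScV.sub {k : ℕ} {C : HVal CV Op} (h : ScV k C) (σ : ℕ → HVal CV Op)
    (hs : ∀ i < k, σ i = .var i) : subV σ C = C := by
  rw [h σ .var hs, subV_var]
theorem ScC.sub0 {C : HComp CV Op} (h : ScC 0 C) (σ : ℕ → HVal CV Op) : subC σ C = C :=
  h.sub σ (by simp)
theorem ScV.sub0 {C : HVal CV Op} (h : ScV 0 C) (σ : ℕ → HVal CV Op) : subV σ C = C :=
  h.sub σ (by simp)
theorem ScC.ren0 {C : HComp CV Op} (h : ScC 0 C) (ρ : ℕ → ℕ) : renC ρ C = C := by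
  rw [renC_sub, h.sub0]
theorem ScV.ren0 {C : HVal CV Op} (h : ScV 0 C) (ρ : ℕ → ℕ) : renV ρ C = C := by
  rw [renV_sub, h.sub0]
theorem ScC.renup {C : HComp CV Op} (h : ScC 1 C) (ρ : ℕ → ℕ) : renC (upr ρ) C = C := by
  rw [renC_sub]; apply h.sub; intro i hi
  obtain rfl : i = 0 := by omega
  rfl
theorem ScC.renup2 {C : HComp CV Op} (h : ScC 2 C) (ρ : ℕ → ℕ) :
    renC (upr (upr ρ)) C = C := by
  rw [renC_sub]; apply h.sub; intro i hi
  rcases i with _ | _ | i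
  · rfl
  · rfl
  · omega
theorem ScC.subup {C : HComp CV Op} (h : ScC 1 C) (σ : ℕ → HVal CV Op) :
    subC (upsH σ) C = C := by
  apply h.sub; intro i hi
  obtain rfl : i = 0 := by omega
  rfl
theorem ScC.subup2 {C : HComp CV Op} (h : ScC 2 C) (σ : ℕ → HVal CV Op) :
    subC (upsH (upsH σ)) C = C := by
  apply h.sub; intro i hi
  rcases i with _ | _ | i
  · rfl
  · rfl
  · omega

theorem ScC.of_sub {C : HComp CV Op} (h : ∀ σ, subC σ C = C) : ScC 0 C := by
  intro σ τ _; rw [h, h]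

theorem ScC.step {C D : HComp CV Op} (h : ScC 0 C) (hs : HStep C D) : ScC 0 D := by
  apply ScC.of_sub
  intro σ
  have := step_sub hs σ
  rw [h.sub0] at this
  exact (step_det hs this).symm

theorem ScC.steps {C D : HComp CV Op} (h : ScC 0 C)
    (hs : Relation.ReflTransGen HStep C D) : ScC 0 D := by
  induction hs with
  | refl => exact h
  | tail _ h2 ih => exact ih.step h2

theorem ScC.subst1 {W : HVal CV Op} {C : HComp CV Op} (h : ScC 1 C) (hW : ScV 0 W) :
    ScC 0 (subst0C W C) := by
  apply ScC.of_sub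
  intro σ
  rw [subst0_sub, hW.sub0, h.subup]

theorem ScC.opc_inv {s : Op} {V : HVal CV Op} {Y : HComp CV Op} (h : ScC 0 (.opc s V Y)) :
    ScC 1 Y := by
  have key : subC (upsH (fun _ => (.num 0 0 : HVal CV Op))) Y = Y := by
    have := h.sub0 (fun _ => .num 0 0)
    simp only [subC, HComp.opc.injEq] at this
    exact this.2.2
  intro σ τ hs
  rw [← key, subC_sub, subC_sub]
  congr 1; funext n; cases n with
  | zero => simp only [upsH, subV]; exact hs 0 (by omega)
  | succ n => simp [upsH, renV, subV]

end Algebra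

end HAux

namespace HAux

open HEPCF P2H

abbrev UV := HVal Unit Unit
abbrev UC := HComp Unit Unit

abbrev Steps : UC → UC → Prop := Relation.ReflTransGen HStep
abbrev StepsP : UC → UC → Prop := Relation.TransGen HStep

theorem Z_sub (σ : ℕ → UV) : ∀ T, subV σ (Z T) = Z T
  | .base _ => by simp [Z, subV]
  | .enum _ => by simp [Z, subV]
  | .arr _ _ U => by simp [Z, subV, subC, Z_sub _ U]

theorem Z_sc (T) : ScV 0 (Z T) := by
  intro σ τ _; rw [Z_sub, Z_sub]

theorem retClause_sub (σ : ℕ → UV) (A : UC) :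
    subC (upsH σ) (retClause A) = retClause (subC σ A) := by
  simp only [retClause, subC, subV, ZUU, upsH]
  rw [subC_ren, ren_subC]
  congr 6
  funext n
  simp only [Function.comp, upsH, renV_renV]; rfl

theorem sigClause_sub (σ : ℕ → UV) (T : PCF.PTy) (B : UC) :
    subC (upsH (upsH σ)) (sigClause T B) = sigClause T (subC (upsH σ) B) := by
  simp only [sigClause, subC, subV, upsH, Z_sub, renV]
  rw [subC_ren, ren_subC]
  congr 7
  funext n
  cases n with
  | zero => rfl
  | succ n => simp only [Function.comp, upsH, renV_renV]; rfl

theorem retClause_ren (ρ : ℕ → ℕ) (A : UC) :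
    renC (upr ρ) (retClause A) = retClause (renC ρ A) := by
  rw [renC_sub, renC_sub, ← retClause_sub, upsH_varren]

theorem sigClause_ren (ρ : ℕ → ℕ) (T : PCF.PTy) (B : UC) :
    renC (upr (upr ρ)) (sigClause T B) = sigClause T (renC (upr ρ) B) := by
  rw [renC_sub, renC_sub, ← upsH_varren, ← upsH_varren, sigClause_sub]

theorem retClause_sc {k : ℕ} {A : UC} (h : ScC k A) : ScC (k+1) (retClause A) := by
  unfold retClause ZUU
  refine .ret (.lam (.letin (.app (.var (by omega)) (.lam (.ret .cv)))
    (.app (.var (by omega)) (.lam (h.ren ?_)))))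
  intro i hi; omega

theorem sigClause_sc {k : ℕ} {T} {B : UC} (h : ScC (k+1) B) : ScC (k+2) (sigClause T B) := by
  unfold sigClause
  refine .letin (.ret (.lam (.letin (.letin (.app (.var (by omega)) .num)
    (.app (.var (by omega)) (.lam (.ret (.lam (.letin (.app (.var (by omega)) .cv)
      (.ret ((Z_sc _).mono (by omega)))))))))
    (.ret .cv)))) (.ret (.lam (.letin (.app (.var (by omega))
      (.lam (.opc .cv (.app (.var (by omega)) .cv))))
    (.app (.var (by omega)) (.lam (h.ren ?_))))))
  intro i hi; cases i with
  | zero => simp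
  | succ i => simp only; omega

/-- Behaves as the numeral `n`. -/
def NC : ℕ → UC → Prop
  | 0, X => Steps X (.ret (.cv ()))
  | n + 1, X => ∃ Y, Steps X (.opc () (.cv ()) Y) ∧ NC n (subst0C (.num 0 1) Y)

theorem NC.expand {n : ℕ} {X X' : UC} (h : Steps X X') (hn : NC n X') : NC n X := by
  cases n with
  | zero => exact h.trans hn
  | succ n => obtain ⟨Y, h1, h2⟩ := hn; exact ⟨Y, h.trans h1, h2⟩

/-- The translated `case`. -/
def caseC (T : PCF.PTy) (X : UV) (A B : UC) : UC :=
  .letin (.handle (retClause A) (fun _ => sigClause T B) (.app X (.cv ())))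
    (.app (.var 0) sndSel)

mutual
/-- Simulation relation on values. -/
inductive RV : List PCF.PTy → UV → PCF.PVal → PCF.PTy → Prop
  | zero {Γ} : RV Γ (.lam (.ret (.cv ()))) .zero .nat
  | succ {Γ A V} : RV Γ A V .nat →
      RV Γ (.lam (.opc () (.cv ()) (.app (renV (· + 2) A) (.cv ())))) (.succ V) .nat
  | var {Γ n T} : Γ[n]? = some T → RV Γ (.var n) (.var n) T
  | lam {Γ A C T U} : RC (T :: Γ) A C U → RV Γ (.lam A) (.lam C) (.arr T U)
  | fixp {Γ A V T U} : RV ((PCF.PTy.arr T U) :: Γ) A V (.arr T U) →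
      RV Γ (.fixv A) (.fixp V) (.arr T U)
  | num {Γ A V n} : V = PCF.pnum n → ScV 0 A → NC n (.app A (.cv ())) → RV Γ A V .nat
/-- Simulation relation on computations. -/
inductive RC : List PCF.PTy → UC → PCF.PComp → PCF.PTy → Prop
  | app {Γ A B V W T U} : RV Γ A V (.arr T U) → RV Γ B W T → RC Γ (.app A B) (.app V W) U
  | ret {Γ A V T} : RV Γ A V T → RC Γ (.ret A) (.ret V) T
  | letin {Γ A B C D T U} : RC Γ A C T → RC (T :: Γ) B D U → RC Γ (.letin A B) (.letin C D) U
  | pcase {Γ X A B V C D T} : RV Γ X V .nat → RC Γ A C T → RC (PCF.PTy.nat :: Γ) B D T →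
      RC Γ (caseC T X A B) (.pcase T V C D) T
end

mutual
theorem trV_rel : ∀ {Γ V T}, PCF.PVTy Γ V T → RV Γ (trV V) V T
  | _, _, _, .zero => by rw [trV]; exact .zero
  | _, _, _, .succ h => by rw [trV]; exact .succ (trV_rel h)
  | _, _, _, .var h => by rw [trV]; exact .var h
  | _, _, _, .lam h => by rw [trV]; exact .lam (trC_rel h)
  | _, _, _, .fixp h => by rw [trV]; exact .fixp (trV_rel h)
theorem trC_rel : ∀ {Γ C T}, PCF.PCTy Γ C T → RC Γ (trC C) C T
  | _, _, _, .app h h' => by rw [trC]; exact .app (trV_rel h) (trV_rel h')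
  | _, _, _, .ret h => by rw [trC]; exact .ret (trV_rel h)
  | _, _, _, .letin h h' => by rw [trC]; exact .letin (trC_rel h) (trC_rel h')
  | _, _, _, .pcase h h' h'' => by
      rw [trC]; exact .pcase (trV_rel h) (trC_rel h') (trC_rel h'')
end

theorem lookup_lt {Γ : List PCF.PTy} {n T} (h : Γ[n]? = some T) : n < Γ.length :=
  (List.getElem?_eq_some_iff.1 h).1

mutual
theorem RV.sc : ∀ {Γ A V T}, RV Γ A V T → ScV Γ.length A
  | _, _, _, _, .zero => .lam (.ret .cv)
  | _, _, _, _, .succ h => .lam (.opc .cv (.app (h.sc.ren (fun i hi => by omega)) .cv))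
  | _, _, _, _, .var h => .var (lookup_lt h)
  | _, _, _, _, .lam h => .lam (RC.sc h)
  | _, _, _, _, .fixp h => .fixv (RV.sc h)
  | _, _, _, _, .num _ h _ => h.mono (by omega)
theorem RC.sc : ∀ {Γ A C T}, RC Γ A C T → ScC Γ.length A
  | _, _, _, _, .app h h' => .app (RV.sc h) (RV.sc h')
  | _, _, _, _, .ret h => .ret (RV.sc h)
  | _, _, _, _, .letin h h' => .letin (RC.sc h) (RC.sc h')
  | _, _, _, _, .pcase h h' h'' =>
      .letin (.handle (retClause_sc (RC.sc h')) (fun _ => sigClause_sc (RC.sc h''))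
        (.app (RV.sc h) .cv))
        (.app (.var (by omega)) (.lam (.ret (.lam (.app (.var (by omega)) .cv)))))
end

theorem pnum_ren (ρ : ℕ → ℕ) : ∀ n, PCF.renV ρ (PCF.pnum n) = PCF.pnum n
  | 0 => by simp [PCF.pnum, PCF.renV]
  | n + 1 => by simp [PCF.pnum, PCF.renV, pnum_ren ρ n]

theorem pnum_sub (ρ : ℕ → PCF.PVal) : ∀ n, PCF.subV ρ (PCF.pnum n) = PCF.pnum n
  | 0 => by simp [PCF.pnum, PCF.subV]
  | n + 1 => by simp [PCF.pnum, PCF.subV, pnum_sub ρ n]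

theorem upr_eq : PCF.upr = HEPCF.upr := by
  funext ρ n; cases n <;> rfl

theorem caseC_ren (ρ : ℕ → ℕ) (T X A B) :
    renC ρ (caseC T X A B) = caseC T (renV ρ X) (renC ρ A) (renC (upr ρ) B) := by
  simp only [caseC, renC, retClause_ren, sigClause_ren, renV, sndSel, upr]

theorem caseC_sub (ρ : ℕ → UV) (T X A B) :
    subC ρ (caseC T X A B) = caseC T (subV ρ X) (subC ρ A) (subC (upsH ρ) B) := by
  simp only [caseC, subC, retClause_sub, sigClause_sub, subV, sndSel, upsH]

theorem up_ok {Γ Δ : List PCF.PTy} {ρ : ℕ → ℕ} {U}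
    (h : ∀ n T, Γ[n]? = some T → Δ[ρ n]? = some T) :
    ∀ n T, (U :: Γ)[n]? = some T → (U :: Δ)[upr ρ n]? = some T := by
  intro n T hn; cases n with
  | zero => simpa [upr] using hn
  | succ n => simp only [upr, List.getElem?_cons_succ] at hn ⊢; exact h _ _ hn

mutual
theorem RV.ren : ∀ {Γ A V T}, RV Γ A V T → ∀ (Δ : List PCF.PTy) (ρ : ℕ → ℕ),
    (∀ n T, Γ[n]? = some T → Δ[ρ n]? = some T) → RV Δ (renV ρ A) (PCF.renV ρ V) T
  | _, _, _, _, .zero, Δ, ρ, hr => by simp only [renV, renC, PCF.renV]; exact .zero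
  | _, _, _, _, .succ h, Δ, ρ, hr => by
      simp only [renV, renC, PCF.renV, renV_renV]
      have := RV.succ (RV.ren h Δ ρ hr)
      rw [renV_renV] at this
      exact this
  | _, _, _, _, .var h, Δ, ρ, hr => by
      simp only [renV, PCF.renV]; exact .var (hr _ _ h)
  | _, _, _, _, .lam h, Δ, ρ, hr => by
      simp only [renV, PCF.renV, upr_eq]; exact .lam (RC.ren h _ _ (up_ok hr))
  | _, _, _, _, .fixp h, Δ, ρ, hr => by
      simp only [renV, PCF.renV, upr_eq]; exact .fixp (RV.ren h _ _ (up_ok hr))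
  | _, _, _, _, .num hv h hn, Δ, ρ, hr => by
      rw [h.ren0, hv, pnum_ren]; exact .num rfl h hn
theorem RC.ren : ∀ {Γ A V T}, RC Γ A V T → ∀ (Δ : List PCF.PTy) (ρ : ℕ → ℕ),
    (∀ n T, Γ[n]? = some T → Δ[ρ n]? = some T) → RC Δ (renC ρ A) (PCF.renC ρ V) T
  | _, _, _, _, .app h h', Δ, ρ, hr => by
      simp only [renC, PCF.renC]; exact .app (RV.ren h _ _ hr) (RV.ren h' _ _ hr)
  | _, _, _, _, .ret h, Δ, ρ, hr => by
      simp only [renC, PCF.renC]; exact .ret (RV.ren h _ _ hr)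
  | _, _, _, _, .letin h h', Δ, ρ, hr => by
      simp only [renC, PCF.renC, upr_eq]
      exact .letin (RC.ren h _ _ hr) (RC.ren h' _ _ (up_ok hr))
  | _, _, _, _, .pcase h h' h'', Δ, ρ, hr => by
      simp only [caseC_ren, PCF.renC, upr_eq]
      exact .pcase (RV.ren h _ _ hr) (RC.ren h' _ _ hr) (RC.ren h'' _ _ (up_ok hr))
end

theorem ups_ok {Γ Δ : List PCF.PTy} {σ : ℕ → UV} {τ : ℕ → PCF.PVal} {U}
    (h : ∀ n T, Γ[n]? = some T → RV Δ (σ n) (τ n) T) :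
    ∀ n T, (U :: Γ)[n]? = some T → RV (U :: Δ) (upsH σ n) (PCF.upsP τ n) T := by
  intro n T hn; cases n with
  | zero => exact .var (by simpa using hn)
  | succ n =>
    simp only [List.getElem?_cons_succ] at hn
    exact (h _ _ hn).ren _ _ (fun n T h => by simpa using h)

mutual
theorem RV.sub : ∀ {Γ A V T}, RV Γ A V T → ∀ (Δ : List PCF.PTy) (σ : ℕ → UV) (τ : ℕ → PCF.PVal),
    (∀ n T, Γ[n]? = some T → RV Δ (σ n) (τ n) T) → RV Δ (subV σ A) (PCF.subV τ V) T
  | _, _, _, _, .zero, Δ, σ, τ, hr => by simp only [subV, subC, PCF.subV]; exact .zero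
  | _, _, _, _, .succ h, Δ, σ, τ, hr => by
      simp only [subV, subC, PCF.subV, subV_ren]
      have := RV.succ (RV.sub h Δ σ τ hr)
      rw [ren_subV] at this
      have e : upsH (upsH σ) ∘ (· + 2) = fun n => renV (· + 2) (σ n) := by
        funext n
        simp only [Function.comp, upsH, renV_renV]; rfl
      rw [e]; exact this
  | _, _, _, _, .var h, Δ, σ, τ, hr => by
      simp only [subV, PCF.subV]; exact hr _ _ h
  | _, _, _, _, .lam h, Δ, σ, τ, hr => by
      simp only [subV, PCF.subV]; exact .lam (RC.sub h _ _ _ (ups_ok hr))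
  | _, _, _, _, .fixp h, Δ, σ, τ, hr => by
      simp only [subV, PCF.subV]; exact .fixp (RV.sub h _ _ _ (ups_ok hr))
  | _, _, _, _, .num hv h hn, Δ, σ, τ, hr => by
      rw [h.sub0, hv, pnum_sub]; exact .num rfl h hn
theorem RC.sub : ∀ {Γ A V T}, RC Γ A V T → ∀ (Δ : List PCF.PTy) (σ : ℕ → UV) (τ : ℕ → PCF.PVal),
    (∀ n T, Γ[n]? = some T → RV Δ (σ n) (τ n) T) → RC Δ (subC σ A) (PCF.subC τ V) T
  | _, _, _, _, .app h h', Δ, σ, τ, hr => by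
      simp only [subC, PCF.subC]; exact .app (RV.sub h _ _ _ hr) (RV.sub h' _ _ _ hr)
  | _, _, _, _, .ret h, Δ, σ, τ, hr => by
      simp only [subC, PCF.subC]; exact .ret (RV.sub h _ _ _ hr)
  | _, _, _, _, .letin h h', Δ, σ, τ, hr => by
      simp only [subC, PCF.subC]
      exact .letin (RC.sub h _ _ _ hr) (RC.sub h' _ _ _ (ups_ok hr))
  | _, _, _, _, .pcase h h' h'', Δ, σ, τ, hr => by
      simp only [caseC_sub, PCF.subC]
      exact .pcase (RV.sub h _ _ _ hr) (RC.sub h' _ _ _ hr) (RC.sub h'' _ _ _ (ups_ok hr))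
end

theorem subst_ok {Δ : List PCF.PTy} {A : UV} {V : PCF.PVal} {U} (h : RV Δ A V U) :
    ∀ n T, (U :: Δ)[n]? = some T →
      RV Δ ((fun n => match n with | 0 => A | n + 1 => .var n : ℕ → UV) n)
        ((fun n => match n with | 0 => V | n + 1 => .var n : ℕ → PCF.PVal) n) T := by
  intro n T hn; cases n with
  | zero => simp at hn; subst hn; exact h
  | succ n => exact .var (by simpa using hn)

theorem RC.subst0 {Γ A C T U W W'} (h : RC (U :: Γ) A C T) (hW : RV Γ W W' U) :
    RC Γ (subst0C W A) (PCF.subst0C W' C) T := h.sub _ _ _ (subst_ok hW)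

theorem RV.subst0 {Γ A C T U W W'} (h : RV (U :: Γ) A C T) (hW : RV Γ W W' U) :
    RV Γ (subst0V W A) (PCF.subst0V W' C) T := h.sub _ _ _ (subst_ok hW)

theorem canon : ∀ (V : PCF.PVal) (A : UV), RV [] A V .nat → ∃ n, V = PCF.pnum n
  | .zero, _, _ => ⟨0, rfl⟩
  | .succ V, A, h => by
      cases h with
      | succ h =>
        obtain ⟨n, rfl⟩ := canon V _ h
        exact ⟨n + 1, rfl⟩
      | num h _ _ => exact ⟨_, h⟩
  | .var n, A, h => by
      cases h with
      | var h => simp at h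
      | num h _ _ => exact ⟨_, h⟩
  | .lam n, A, h => by
      cases h with
      | num h _ _ => exact ⟨_, h⟩
  | .fixp n, A, h => by
      cases h with
      | num h _ _ => exact ⟨_, h⟩

theorem pnum_inj : ∀ {n m}, PCF.pnum n = PCF.pnum m → n = m
  | 0, 0, _ => rfl
  | 0, m+1, h => by simp [PCF.pnum] at h
  | n+1, 0, h => by simp [PCF.pnum] at h
  | n+1, m+1, h => by
      simp only [PCF.pnum, PCF.PVal.succ.injEq] at h; rw [pnum_inj h]

theorem beta' {C D : UC} {W : UV} (h : subst0C W C = D) : HStep (.app (.lam C) W) D :=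
  h ▸ .beta C W
theorem letRet' {C D : UC} {W : UV} (h : subst0C W C = D) : HStep (.letin (.ret W) C) D :=
  h ▸ .letRet W C

theorem rv_num : ∀ (n : ℕ) (A : UV) (V : PCF.PVal), V = PCF.pnum n → RV [] A V .nat →
    NC n (.app A (.cv ()))
  | 0, A, V, hv, h => by
      cases h with
      | zero => exact .single (beta' (by simp [subst0C, subC, subV]))
      | succ h => simp [PCF.pnum] at hv
      | var h => simp at h
      | num h1 _ h2 => rw [hv] at h1; rw [pnum_inj h1]; exact h2
  | n+1, A, V, hv, h => by
      cases h with
      | zero => simp [PCF.pnum] at hv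
      | succ h =>
        simp only [PCF.pnum, PCF.PVal.succ.injEq] at hv
        have hs : ScV 0 _ := h.sc
        have := rv_num n _ _ hv h
        refine ⟨_, .single (beta' rfl), ?_⟩
        simpa [subst0C, subC, subV, hs.ren0, hs.sub0] using this
      | var h => simp at h
      | num h1 _ h2 => rw [hv] at h1; rw [pnum_inj h1]; exact h2

end HAux

namespace HAux

open HEPCF P2H

/-- The encoded pair `λp. p a b`. -/
def pairV (a b : UV) : UV := .lam (.letin (.app (.var 0) a) (.app (.var 0) b))

/-- The selector used by the `σ` clause. -/
def GV (T : PCF.PTy) : UV :=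
  .lam (.ret (.lam (.letin (.app (.var 1) (.cv ())) (.ret (Z (trTy T))))))

/-- The predecessor thunk built by the `σ` clause. -/
def nV (K : UV) (T : PCF.PTy) : UV :=
  .lam (.letin (.letin (.app K (.num 0 1)) (.app (.var 0) (GV T))) (.ret (.cv ())))

theorem GV_sc (T) : ScV 0 (GV T) :=
  .lam (.ret (.lam (.letin (.app (.var (by omega)) .cv) (.ret ((Z_sc _).mono (by omega))))))

theorem nV_sc {K T} (h : ScV 0 K) : ScV 0 (nV K T) :=
  .lam (.letin (.letin (.app (h.mono (by omega)) .num)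
    (.app (.var (by omega)) ((GV_sc T).mono (by omega)))) (.ret .cv))

theorem sndSel_sc : ScV 0 sndSel := .lam (.ret (.lam (.app (.var (by omega)) .cv)))
theorem ZUU_sc : ScV 0 ZUU := .lam (.ret .cv)

theorem let_steps {X Y : UC} (B : UC) (h : Steps X Y) : Steps (.letin X B) (.letin Y B) :=
  h.lift (fun c => HComp.letin c B) (fun _ _ h => .letCong B h)

theorem handle_steps {X Y : UC} (R : UC) (H) (h : Steps X Y) :
    Steps (.handle R H X) (.handle R H Y) :=
  h.lift (fun c => HComp.handle R H c) (fun _ _ h => .hCong R H h)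

theorem pair_app {a b P : UV} (ha : ScV 0 a) (hb : ScV 0 b) :
    HStep (.app (pairV a b) P) (.letin (.app P a) (.app (.var 0) b)) :=
  beta' (by simp [subst0C, subC, subV, ha.sub0, hb.sub0, upsH])

theorem pair_snd {a b : UV} (ha : ScV 0 a) (hb : ScV 0 b) :
    StepsP (.app (pairV a b) sndSel) (.app b (.cv ())) := by
  refine .head (pair_app ha hb) ?_
  refine .head (.letCong _ (beta' (D := .ret (.lam (.app (.var 0) (.cv ())))) ?_)) ?_
  · simp [subst0C, subC, subV, upsH]
  refine .head (letRet' (D := .app (.lam (.app (.var 0) (.cv ()))) b) ?_) ?_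
  · simp [subst0C, subC, subV, hb.sub0]
  refine .single (beta' ?_)
  simp [subst0C, subC, subV]

theorem pair_G {a b : UV} (T) (ha : ScV 0 a) (hb : ScV 0 b) :
    Steps (.app (pairV a b) (GV T)) (.letin (.app a (.cv ())) (.ret (Z (trTy T)))) := by
  refine .head (pair_app ha hb) ?_
  refine .head (.letCong _ (beta'
    (D := .ret (.lam (.letin (.app a (.cv ())) (.ret (Z (trTy T)))))) ?_)) ?_
  · simp [subst0C, subC, subV, upsH, ha.ren0, Z_sub]
  refine .head (letRet' (D := .app (.lam (.letin (.app a (.cv ())) (.ret (Z (trTy T))))) b) ?_) ?_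
  · simp [subst0C, subC, subV, hb.sub0]
  refine .single (beta' ?_)
  simp [subst0C, subC, subV, ha.sub0, Z_sub]

theorem ret_red {A : UC} (H) (hA : ScC 0 A) :
    HStep (.handle (retClause A) H (.ret (.cv ()))) (.ret (pairV ZUU (.lam A))) := by
  have := HStep.hRet (retClause A) H (.cv ())
  have e : subst0C (.cv ()) (retClause A) = .ret (pairV ZUU (.lam A)) := by
    simp only [retClause, subst0C, subC, subV, hA.ren0, hA.sub0, ZUU_sc.sub0, upsH, pairV]
  rwa [e] at this

/-- The captured continuation. -/
abbrev KV (T : PCF.PTy) (A B Y : UC) : UV :=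
  contVal (retClause A) (fun _ => sigClause T B) Y

theorem KV_eq {T} {A B Y : UC} (hA : ScC 0 A) (hB : ScC 1 B) :
    KV T A B Y = .lam (.handle (retClause A) (fun _ => sigClause T B) Y) := by
  have h1 : ScC 1 (retClause A) := retClause_sc hA
  have h2 : ScC 2 (sigClause T B) := sigClause_sc hB
  simp only [contVal, h1.renup, h2.renup2]

theorem KV_sc {T} {A B Y : UC} (hA : ScC 0 A) (hB : ScC 1 B) (hY : ScC 1 Y) :
    ScV 0 (KV T A B Y) := by
  rw [KV_eq hA hB]
  exact .lam (.handle ((retClause_sc hA).mono (by omega))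
    (fun _ => (sigClause_sc hB).mono (by omega)) hY)

theorem KV_app {T} {A B Y : UC} (hA : ScC 0 A) (hB : ScC 1 B) :
    HStep (.app (KV T A B Y) (.num 0 1))
      (.handle (retClause A) (fun _ => sigClause T B) (subst0C (.num 0 1) Y)) := by
  rw [KV_eq hA hB]
  refine beta' ?_
  have h1 : ScC 1 (retClause A) := retClause_sc hA
  have h2 : ScC 2 (sigClause T B) := sigClause_sc hB
  simp only [subst0C, subC, h1.subup, h2.subup2]

theorem sig_red {T} {A B Y : UC} (hA : ScC 0 A) (hB : ScC 1 B) (hY : ScC 1 Y) :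
    Steps (.handle (retClause A) (fun _ => sigClause T B) (.opc () (.cv ()) Y))
      (.ret (pairV (.lam (.opc () (.cv ()) (.app (nV (KV T A B Y) T) (.cv ()))))
        (.lam (subst0C (nV (KV T A B Y) T) B)))) := by
  have hK : ScV 0 (KV T A B Y) := KV_sc hA hB hY
  refine .head (.hOp _ _ _ _ _) ?_
  change Steps (subC (sub2 (KV T A B Y) (.cv ())) (sigClause T B)) _
  generalize KV T A B Y = K at hK
  have hN : ScV 0 (nV K T) := nV_sc hK
  have e : subC (sub2 K (.cv ())) (sigClause T B) =
      .letin (.ret (nV K T)) (subC (upsH (sub2 K (.cv ())))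
        (.ret (.lam
      (.letin (.app (.var 0) (.lam (.opc () (.cv ()) (.app (.var 3) (.cv ())))))
        (.app (.var 0)
          (.lam (renC (fun m => match m with | 0 => 3 | m + 1 => m + 6) B))))))) := by
    simp only [sigClause, subC, subV, nV, GV, upsH, sub2, Z_sub, hK.ren0, renV]
  rw [e]
  refine .single (letRet' ?_)
  simp only [subst0C, subC, subV, upsH, renV, pairV, subC_ren, subC_sub, hN.ren0]
  congr 5
  apply hB
  intro i hi
  obtain rfl : i = 0 := by omega
  simp only [Function.comp, upsH, renV, subV, hN.ren0]

theorem NC_wrap (T) : ∀ (k : ℕ) (X : UC), NC k X →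
    NC k (.letin (.letin X (.ret (Z T))) (.ret (.cv ())))
  | 0, X, h => by
      refine (let_steps _ (let_steps _ h)).trans ?_
      refine .head (.letCong _ (letRet' (D := .ret (Z T)) ?_)) ?_
      · simp [subst0C, subC, Z_sub]
      refine .single (letRet' ?_)
      simp [subst0C, subC, subV]
  | k+1, X, ⟨Y, h, hY⟩ => by
      refine ⟨_, ((let_steps _ (let_steps _ h)).trans
        (.head (.letCong _ (.letOp _ _ _ _)) (.single (.letOp _ _ _ _)))), ?_⟩
      have := NC_wrap T k _ hY
      simpa [subst0C, subC, renC, renV, subV, (Z_sc T).ren0, Z_sub] using this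

theorem nV_run {T} {A B Y : UC} (hA : ScC 0 A) (hB : ScC 1 B) (hY : ScC 1 Y)
    {a b : UV} (ha : ScV 0 a) (hb : ScV 0 b)
    (h : Steps (.handle (retClause A) (fun _ => sigClause T B) (subst0C (.num 0 1) Y))
        (.ret (pairV a b))) :
    Steps (.app (nV (KV T A B Y) T) (.cv ()))
      (.letin (.letin (.app a (.cv ())) (.ret (Z (trTy T)))) (.ret (.cv ()))) := by
  have hK : ScV 0 (KV T A B Y) := KV_sc hA hB hY
  have s1 : Steps (.app (nV (KV T A B Y) T) (.cv ()))
      (.letin (.letin (.handle (retClause A) (fun _ => sigClause T B) (subst0C (.num 0 1) Y))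
        (.app (.var 0) (GV T))) (.ret (.cv ()))) := by
    refine .head (beta' (D := .letin (.letin (.app (KV T A B Y) (.num 0 1))
      (.app (.var 0) (GV T))) (.ret (.cv ()))) ?_) ?_
    · simp only [subst0C, subC, subV, upsH, hK.sub0, (GV_sc T).sub0]
    exact .single (.letCong _ (.letCong _ (KV_app hA hB)))
  refine s1.trans ((let_steps _ (let_steps _ h)).trans ?_)
  refine let_steps _ (.head (letRet' ?_) (pair_G T ha hb))
  simp only [subst0C, subC, subV, (GV_sc T).sub0]

theorem nV_NC {T} {A B : UC} (hA : ScC 0 A) (hB : ScC 1 B) : ∀ (m : ℕ) (Y : UC), ScC 1 Y →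
    NC m (subst0C (.num 0 1) Y) → NC m (.app (nV (KV T A B Y) T) (.cv ())) := by
  intro m
  induction m with
  | zero =>
    intro Y hY hm
    have h := nV_run (T := T) hA hB hY ZUU_sc (.lam (hA.mono (by omega)))
      ((handle_steps _ _ hm).tail (ret_red _ hA))
    refine NC.expand h (NC_wrap _ 0 _ ?_)
    exact .single (beta' (by simp [subst0C, subC, subV]))
  | succ m ih =>
    rintro Y hY ⟨Y', h1, h2⟩
    have hY' : ScC 1 Y' := ((hY.subst1 .num).steps h1).opc_inv
    have hN := nV_sc (T := T) (KV_sc (T := T) hA hB hY')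
    have ha : ScV 0 (.lam (.opc () (.cv ()) (.app (nV (KV T A B Y') T) (.cv ())))) :=
      .lam (.opc .cv (.app (hN.mono (by omega)) .cv))
    have h := nV_run hA hB hY ha (.lam ((hB.subst1 hN).mono (by omega)))
      ((handle_steps _ _ h1).trans (sig_red hA hB hY'))
    refine NC.expand h (NC_wrap _ (m+1) _ ?_)
    refine ⟨_, .single (beta' rfl), ?_⟩
    simp only [subC, subV, hN.sub0, subst0C]
    exact ih Y' hY' h2

theorem case_red {T} {X : UV} {A B : UC} {a b : UV} {D : UC} (ha : ScV 0 a)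
    (hD : ScC 0 D) (hb : b = .lam D)
    (h : Steps (.handle (retClause A) (fun _ => sigClause T B) (.app X (.cv ())))
      (.ret (pairV a b))) :
    StepsP (caseC T X A B) D := by
  subst hb
  have hb : ScV 0 (.lam D) := .lam (hD.mono (by omega))
  refine Relation.TransGen.trans_right (let_steps _ h) ?_
  refine .head (letRet' (D := .app (pairV a (.lam D)) sndSel) ?_) ?_
  · simp only [subst0C, subC, subV, sndSel_sc.sub0]
  refine (pair_snd ha hb).tail (beta' ?_)
  simp only [subst0C, hD.sub0]

theorem sim {C D : PCF.PComp} (h : PCF.PStep C D) :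
    ∀ A T, RC [] A C T → ∃ B, StepsP A B ∧ RC [] B D T := by
  induction h with
  | beta C W =>
    intro A T h
    cases h with
    | app h1 h2 =>
      cases h1 with
      | lam h1 => exact ⟨_, .single (.beta _ _), h1.subst0 h2⟩
  | fix V W =>
    intro A T h
    cases h with
    | app h1 h2 =>
      cases h1 with
      | fixp h1 => exact ⟨_, .single (.fix _ _), .app (h1.subst0 (.fixp h1)) h2⟩
  | letRet V C =>
    intro A T h
    cases h with
    | letin h1 h2 =>
      cases h1 with
      | ret h1 => exact ⟨_, .single (.letRet _ _), h2.subst0 h1⟩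
  | letCong B _ ih =>
    intro A T h
    cases h with
    | @letin _ _ B' _ _ _ _ h1 h2 =>
      obtain ⟨A', h3, h4⟩ := ih _ _ h1
      exact ⟨_, h3.lift (fun c => HComp.letin c B') (fun _ _ h => .letCong B' h), .letin h4 h2⟩
  | caseZero T C D =>
    intro A T h
    cases h with
    | pcase h1 h2 h3 =>
      refine ⟨_, ?_, h2⟩
      have hn : NC 0 _ := rv_num 0 _ _ rfl h1
      exact case_red ZUU_sc h2.sc rfl ((handle_steps _ _ hn).tail (ret_red _ h2.sc))
  | caseSucc T V C D =>
    intro A T h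
    cases h with
    | @pcase _ X A B _ _ _ _ h1 h2 h3 =>
      obtain ⟨n, hn⟩ := canon _ _ h1
      cases n with
      | zero => simp [PCF.pnum] at hn
      | succ n =>
        obtain ⟨Y, h4, h5⟩ := rv_num (n+1) _ _ hn h1
        simp only [PCF.pnum, PCF.PVal.succ.injEq] at hn
        have hX : ScV 0 X := h1.sc
        have hY : ScC 1 Y := ((ScC.app hX .cv).steps h4).opc_inv
        have hK : ScV 0 (KV T A B Y) := KV_sc h2.sc h3.sc hY
        have hN : ScV 0 (nV (KV T A B Y) T) := nV_sc hK
        refine ⟨subst0C (nV (KV T A B Y) T) B, ?_,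
          h3.subst0 (.num hn hN (nV_NC h2.sc h3.sc n Y hY h5))⟩
        refine case_red (.lam (.opc .cv (.app (hN.mono (by omega)) .cv)))
          (ScC.subst1 h3.sc hN) rfl
          ((handle_steps _ _ h4).trans (sig_red h2.sc h3.sc hY))

theorem sims {C D : PCF.PComp} (h : Relation.ReflTransGen PCF.PStep C D) :
    ∀ A T, RC [] A C T → ∃ B, Steps A B ∧ RC [] B D T := by
  induction h with
  | refl => intro A T h; exact ⟨A, .refl, h⟩
  | tail _ h2 ih =>
    intro A T h
    obtain ⟨B, h3, h4⟩ := ih A T h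
    obtain ⟨B', h5, h6⟩ := sim h2 _ _ h4
    exact ⟨B', h3.trans h5.to_reflTransGen, h6⟩

/-- Confluence towards a normal form. -/
theorem to_nf {X N Y : UC} (hN : ∀ D, ¬ HStep N D) (h : Steps X N) (h' : Steps X Y) :
    Steps Y N := by
  induction h' with
  | refl => exact h
  | tail _ h2 ih =>
    rcases Relation.ReflTransGen.cases_head ih with rfl | ⟨c, h3, h4⟩
    · exact absurd h2 (hN _)
    · rw [step_det h2 h3]; exact h4

theorem nf_unique {X N N' : UC} (hN : ∀ D, ¬ HStep N D) (hN' : ∀ D, ¬ HStep N' D)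
    (h : Steps X N) (h' : Steps X N') : N = N' := by
  rcases Relation.ReflTransGen.cases_head (to_nf hN h h') with h | ⟨c, h3, _⟩
  · exact h.symm
  · exact absurd h3 (hN' _)

theorem et_ret {X : UC} {V : UV} (h : Steps X (.ret V)) (p l) :
    ETAt opArU X p l ↔ p = [] ∧ l = some (.retl V) := by
  constructor
  · intro he
    cases he with
    | bot hd => obtain ⟨D, hD⟩ := hd _ h; exact absurd hD ret_nostep
    | retn h' =>
      have := nf_unique (fun _ => ret_nostep) (fun _ => ret_nostep) h h'
      simp_all
    | opHead h' =>
      have := nf_unique (fun _ => ret_nostep) (fun _ => opc_nostep) h h'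
      simp at this
    | opParam h' =>
      have := nf_unique (fun _ => ret_nostep) (fun _ => opc_nostep) h h'
      simp at this
    | opChild h' =>
      have := nf_unique (fun _ => ret_nostep) (fun _ => opc_nostep) h h'
      simp at this
  · rintro ⟨rfl, rfl⟩; exact .retn h

theorem et_op {X Y : UC} (h : Steps X (.opc () (.cv ()) Y)) (p l) :
    ETAt opArU X p l ↔ (p = [] ∧ l = some (.opl ())) ∨ (p = [0] ∧ l = some (.cvl ())) ∨
      ∃ q, p = 1 :: q ∧ ETAt opArU (subst0C (.num 0 1) Y) q l := by
  constructor
  · intro he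
    cases he with
    | bot hd => obtain ⟨D, hD⟩ := hd _ h; exact absurd hD opc_nostep
    | retn h' =>
      have := nf_unique (fun _ => opc_nostep) (fun _ => ret_nostep) h h'
      simp at this
    | opHead h' => exact .inl ⟨rfl, rfl⟩
    | opParam h' => exact .inr (.inl ⟨rfl, rfl⟩)
    | opChild h' hi he =>
      have := nf_unique (fun _ => opc_nostep) (fun _ => opc_nostep) h h'
      simp only [HComp.opc.injEq] at this
      obtain ⟨_, _, rfl⟩ := this
      simp only [opArU, Nat.lt_one_iff] at hi
      subst hi
      exact .inr (.inr ⟨_, rfl, he⟩)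
  · rintro (⟨rfl, rfl⟩ | ⟨rfl, rfl⟩ | ⟨q, rfl, he⟩)
    · exact .opHead h
    · exact .opParam h
    · exact .opChild (i := 0) h (by simp [opArU]) he

theorem numTree_succ (n p l) : numTreeAt (n+1) p l ↔
    (p = [] ∧ l = some (.opl ())) ∨ (p = [0] ∧ l = some (.cvl ())) ∨
      ∃ q, p = 1 :: q ∧ numTreeAt n q l := by
  constructor
  · rintro (⟨m, hm, rfl, rfl⟩ | ⟨m, hm, rfl, rfl⟩ | ⟨rfl, rfl⟩)
    · cases m with
      | zero => exact .inl ⟨rfl, rfl⟩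
      | succ m => exact .inr (.inr ⟨_, rfl, .inl ⟨m, by omega, rfl, rfl⟩⟩)
    · cases m with
      | zero => exact .inr (.inl ⟨rfl, rfl⟩)
      | succ m => exact .inr (.inr ⟨_, rfl, .inr (.inl ⟨m, by omega, rfl, rfl⟩)⟩)
    · exact .inr (.inr ⟨_, rfl, .inr (.inr ⟨rfl, rfl⟩)⟩)
  · rintro (⟨rfl, rfl⟩ | ⟨rfl, rfl⟩ | ⟨q, rfl, ⟨m, hm, rfl, rfl⟩ | ⟨m, hm, rfl, rfl⟩ | ⟨rfl, rfl⟩⟩)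
    · exact .inl ⟨0, by omega, rfl, rfl⟩
    · exact .inr (.inl ⟨0, by omega, rfl, rfl⟩)
    · exact .inl ⟨m+1, by omega, rfl, rfl⟩
    · exact .inr (.inl ⟨m+1, by omega, rfl, rfl⟩)
    · exact .inr (.inr ⟨rfl, rfl⟩)

theorem et_num : ∀ (n : ℕ) (X : UC), NC n X → ∀ p l, ETAt opArU X p l ↔ numTreeAt n p l
  | 0, X, h, p, l => by rw [et_ret h]; simp [numTreeAt]
  | n+1, X, ⟨Y, h, hY⟩, p, l => by
      rw [et_op h, numTree_succ]
      simp only [et_num n _ hY]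

theorem et_bot {X : UC} (h : HDiverges X) (p l) :
    ETAt opArU X p l ↔ p = [] ∧ l = none := by
  constructor
  · intro he
    cases he with
    | bot hd => exact ⟨rfl, rfl⟩
    | retn h' => obtain ⟨D, hD⟩ := h _ h'; exact absurd hD ret_nostep
    | opHead h' => obtain ⟨D, hD⟩ := h _ h'; exact absurd hD opc_nostep
    | opParam h' => obtain ⟨D, hD⟩ := h _ h'; exact absurd hD opc_nostep
    | opChild h' => obtain ⟨D, hD⟩ := h _ h'; exact absurd hD opc_nostep
  · rintro ⟨rfl, rfl⟩; exact .bot h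

theorem div_coind (P : UC → Prop) (hP : ∀ X, P X → ∃ Y, StepsP X Y ∧ P Y) {X : UC} (hX : P X) :
    HDiverges X := by
  have inv : ∀ X, (∃ Y, Steps X Y ∧ P Y) → ∃ Y, StepsP X Y ∧ P Y := by
    rintro X ⟨Y, h1, h2⟩
    obtain ⟨Y', h3, h4⟩ := hP _ h2
    exact ⟨Y', Relation.TransGen.trans_right h1 h3, h4⟩
  intro D hD
  have key : ∃ Y, Steps D Y ∧ P Y := by
    induction hD with
    | refl => exact ⟨X, .refl, hX⟩
    | tail _ h2 ih =>
      obtain ⟨Y, h3, h4⟩ := inv _ ih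
      obtain ⟨c, h5, h6⟩ := Relation.TransGen.head'_iff.1 h3
      rw [step_det h2 h5]
      exact ⟨Y, h6, h4⟩
  obtain ⟨Y, h3, _⟩ := inv _ key
  obtain ⟨c, h5, _⟩ := Relation.TransGen.head'_iff.1 h3
  exact ⟨c, h5⟩

abbrev HT := HTy Unit Unit

abbrev VT := @HVTy Unit Unit Unit cvTyU opParU opArU
abbrev CT := @HCTy Unit Unit Unit cvTyU opParU opArU

theorem upH_ok {Γ Δ : List HT} {ρ : ℕ → ℕ} {U}
    (h : ∀ n T, Γ[n]? = some T → Δ[ρ n]? = some T) :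
    ∀ n T, (U :: Γ)[n]? = some T → (U :: Δ)[upr ρ n]? = some T := by
  intro n T hn; cases n with
  | zero => simpa [upr] using hn
  | succ n => simp only [upr, List.getElem?_cons_succ] at hn ⊢; exact h _ _ hn

mutual
theorem VT_ren : ∀ {Γ V T}, VT Γ V T → ∀ (Δ : List HT) (ρ : ℕ → ℕ),
    (∀ n T, Γ[n]? = some T → Δ[ρ n]? = some T) → VT Δ (renV ρ V) T
  | _, _, _, .cv v, Δ, ρ, hr => by rw [renV]; exact .cv v
  | _, _, _, .num h, Δ, ρ, hr => by rw [renV]; exact .num h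
  | _, _, _, .var h, Δ, ρ, hr => by rw [renV]; exact .var (hr _ _ h)
  | _, _, _, .lam h, Δ, ρ, hr => by rw [renV]; exact .lam (CT_ren h _ _ (upH_ok hr))
  | _, _, _, .fixv h, Δ, ρ, hr => by rw [renV]; exact .fixv (VT_ren h _ _ (upH_ok hr))
theorem CT_ren : ∀ {Γ E C T}, CT Γ E C T → ∀ (Δ : List HT) (ρ : ℕ → ℕ),
    (∀ n T, Γ[n]? = some T → Δ[ρ n]? = some T) → CT Δ E (renC ρ C) T
  | _, _, _, _, .app h h', Δ, ρ, hr => by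
      rw [renC]; exact .app (VT_ren h _ _ hr) (VT_ren h' _ _ hr)
  | _, _, _, _, .ret h, Δ, ρ, hr => by rw [renC]; exact .ret (VT_ren h _ _ hr)
  | _, _, _, _, .letin h h', Δ, ρ, hr => by
      rw [renC]; exact .letin (CT_ren h _ _ hr) (CT_ren h' _ _ (upH_ok hr))
  | _, _, _, _, .opc hs h h', Δ, ρ, hr => by
      rw [renC]; exact .opc hs (VT_ren h _ _ hr) (CT_ren h' _ _ (upH_ok hr))
  | _, _, _, _, .case h h', Δ, ρ, hr => by
      rw [renC]; exact .case (VT_ren h _ _ hr) (fun i => CT_ren (h' i) _ _ hr)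
  | _, _, _, _, .handle h h' h'', Δ, ρ, hr => by
      rw [renC]
      exact .handle (CT_ren h _ _ hr) (CT_ren h' _ _ (upH_ok hr))
        (fun s hs => CT_ren (h'' s hs) _ _ (upH_ok (upH_ok hr)))
end

theorem Z_ty : ∀ (T : PCF.PTy) (Γ : List HT), VT Γ (Z (trTy T)) (trTy T)
  | .nat, Γ => by rw [trTy, Z, Z]; exact .lam (.ret (.cv ()))
  | .arr T U, Γ => by rw [trTy, Z]; exact .lam (.ret (Z_ty U _))

theorem case_ty {Γ : List HT} {T : PCF.PTy} {X : UV} {A B : UC}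
    (hX : VT Γ X (trTy .nat)) (hA : CT Γ EU A (trTy T)) (hB : CT (trTy .nat :: Γ) EU B (trTy T)) :
    CT Γ EU (caseC T X A B) (trTy T) := by
  let UU : HT := .arr (.base ()) EU (.base ())
  let P : HT := .arr UU EU (.arr (.arr (.base ()) EU (trTy T)) EU (trTy T))
  have hXa : CT Γ EU (.app X (.cv ())) (.base ()) := by
    rw [trTy] at hX
    exact .app hX (.cv ())
  unfold caseC
  refine .letin (T := .arr P EU (trTy T)) (.handle (E' := EU) hXa ?_ ?_) ?_
  · refine .ret (.lam (.letin (.app (.var rfl) (.lam (.ret (.cv ())))) ?_))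
    refine .app (.var rfl) (.lam (CT_ren hA _ _ ?_))
    intro n T hn; simpa using hn
  · intro s _
    refine .letin (T := UU) (.ret (.lam (.letin (T := trTy T) (.letin (T := .arr P EU (trTy T)) (.app (.var rfl) (.num (by decide)))
      (.app (.var rfl) (.lam (.ret (.lam (.letin (.app (.var rfl) (.cv ()))
        (.ret (Z_ty _ _)))))))) (.ret (.cv ()))))) ?_
    refine .ret (.lam (.letin (.app (.var rfl)
      (.lam (.opc (Set.mem_univ _) (.cv ()) (.app (.var rfl) (.cv ()))))) ?_))
    refine .app (.var rfl) (.lam (CT_ren hB _ _ ?_))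
    intro n T hn; cases n with
    | zero => simpa [trTy, UU] using hn
    | succ n => simpa using hn
  · exact .app (.var rfl) (.lam (.ret (.lam (.app (.var rfl) (.cv ())))))

theorem map_lookup {Γ : List PCF.PTy} {n : ℕ} {T : PCF.PTy} (h : Γ[n]? = some T) :
    (Γ.map trTy)[n]? = some (trTy T) := by simp [h]

mutual
theorem trV_ty : ∀ {Γ V T}, PCF.PVTy Γ V T → VT (Γ.map trTy) (trV V) (trTy T)
  | _, _, _, .zero => by rw [trV, trTy]; exact .lam (.ret (.cv ()))
  | _, _, _, .succ h => by
      have ih := trV_ty h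
      rw [trTy] at ih
      rw [trV, trTy]
      refine .lam (.opc (Set.mem_univ _) (.cv ()) (.app (VT_ren ih _ _ ?_) (.cv ())))
      intro n T hn; simpa using hn
  | _, _, _, .var h => by rw [trV]; exact .var (map_lookup h)
  | _, _, _, .lam h => by rw [trV, trTy]; exact .lam (trC_ty h)
  | _, _, _, .fixp h => by
      have ih := trV_ty h
      rw [List.map_cons, trTy] at ih
      rw [trV, trTy]; exact .fixv ih
theorem trC_ty : ∀ {Γ C T}, PCF.PCTy Γ C T → CT (Γ.map trTy) EU (trC C) (trTy T)
  | _, _, _, .app h h' => by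
      have ih := trV_ty h
      rw [trTy] at ih
      rw [trC]; exact .app ih (trV_ty h')
  | _, _, _, .ret h => by rw [trC]; exact .ret (trV_ty h)
  | _, _, _, .letin h h' => by rw [trC]; exact .letin (trC_ty h) (trC_ty h')
  | _, _, _, .pcase h h' h'' => by
      rw [trC]; exact case_ty (trV_ty h) (trC_ty h') (trC_ty h'')
end

theorem main_ty {C} (hC : PCF.PCTy [] C .nat) : CT [] EU (Cf C) (.base ()) := by
  have := trC_ty hC
  rw [trTy] at this
  exact .letin this (.app (.var rfl) (.cv ()))

theorem main_num {C} (hC : PCF.PCTy [] C .nat) (n : ℕ)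
    (h : Relation.ReflTransGen PCF.PStep C (.ret (PCF.pnum n))) (p l) :
    ETAt opArU (Cf C) p l ↔ numTreeAt n p l := by
  obtain ⟨B, h1, h2⟩ := sims h _ _ (trC_rel hC)
  cases h2 with
  | ret h2 =>
    refine et_num n _ (NC.expand ((let_steps _ h1).tail (letRet' ?_)) (rv_num n _ _ rfl h2)) p l
    simp only [subst0C, subC, subV]

theorem main_div {C} (hC : PCF.PCTy [] C .nat) (h : PDiverges C) : HDiverges (Cf C) := by
  refine div_coind (fun X => ∃ A C, X = .letin A (.app (.var 0) (.cv ())) ∧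
    RC [] A C .nat ∧ PDiverges C) ?_ ⟨_, _, rfl, trC_rel hC, h⟩
  rintro X ⟨A, C, rfl, h1, h2⟩
  obtain ⟨D, hD⟩ := h2 _ .refl
  obtain ⟨B, h3, h4⟩ := sim hD _ _ h1
  refine ⟨_, h3.lift (fun c => HComp.letin c _) (fun _ _ h => .letCong _ h), _, _, rfl, h4, ?_⟩
  intro D' hD'
  exact h2 _ (.head hD hD')

end HAux

open PCF HEPCF P2H in
/-- The PCF-to-HEPCF translation correctly computes numerals: for every
closed PCF term `⊢ C : Nat`, the computation `C_f = let a = ⟦C⟧ in a ()` is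
closed of type `Unit` and its effect tree is `σⁿ(return(()))` when `C`
evaluates to the numeral `n`, and `⊥` when `C` diverges. -/
theorem pcf_to_hepcf_numerals (C : PComp) (hC : PCTy [] C .nat) :
    HCTy cvTyU opParU opArU [] EU (Cf C) (.base ()) ∧
    (∀ n : ℕ, Relation.ReflTransGen PStep C (.ret (pnum n)) →
      ∀ p l, ETAt opArU (Cf C) p l ↔ numTreeAt n p l) ∧
    (PDiverges C →
      ∀ p l, ETAt opArU (Cf C) p l ↔ (p = [] ∧ l = none)) := by
  exact ⟨HAux.main_ty hC, fun n h p l => HAux.main_num hC n h p l,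
    fun h p l => HAux.et_bot (HAux.main_div hC h) p l⟩
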